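/- arXiv:2510.04600 — 3 statements merged into one kernel-verified Lean document; each statement's English description precedes it below -/
import Mathlib

section
/- (Lemma 3, second identity: 𝒫(S(P,ε), P, ε) = 1.) Fix P > 0 and ε > 0. Suppose the supremum defining S(P, ε) is attained at some feasible point and S(P, ε) > 0. Then 𝒫(S(P, ε), P, ε) = 1. -/
open Matrix Finset

noncomputable section

/-- `SINR_k(f) = |h_kᴴ f_k|² / (∑_{j≠k} |h_kᴴ f_j|² + σ²)`. -/
def SINR {Nt K : ℕ} (h : Fin K → Fin Nt → ℂ) (σ2 : ℝ)
    (f : Fin K → Fin Nt → ℂ) (k : Fin K) : ℝ :=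
  ‖star (h k) ⬝ᵥ f k‖ ^ 2 /
    ((∑ j ∈ Finset.univ.erase k, ‖star (h k) ⬝ᵥ f j‖ ^ 2) + σ2)

/-- `power(f) = ∑_k ‖f_k‖²`. -/
def power {Nt K : ℕ} (f : Fin K → Fin Nt → ℂ) : ℝ := ∑ k, ∑ i, ‖f k i‖ ^ 2

/-- `g(f) = ∑_k |aᵀ f_k|²`. -/
def gfun {Nt K : ℕ} (a : Fin Nt → ℂ) (f : Fin K → Fin Nt → ℂ) : ℝ :=
  ∑ k, ‖a ⬝ᵥ f k‖ ^ 2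

/-- The CRLB `C(q) = tr((Λ (q D) Λᵀ)⁻¹)`. -/
def Cq {N : ℕ} (Λ : Matrix (Fin 2) (Fin N) ℝ)
    (D : Matrix (Fin N) (Fin N) ℝ) (q : ℝ) : ℝ :=
  ((Λ * (q • D) * Λᵀ)⁻¹).trace

/-- Value set of the max-min-SINR problem `S(P, ε)`. -/
def Sfeas {Nt K N : ℕ} (h : Fin K → Fin Nt → ℂ) (a : Fin Nt → ℂ) (σ2 : ℝ)
    (Λ : Matrix (Fin 2) (Fin N) ℝ) (D : Matrix (Fin N) (Fin N) ℝ)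
    (P ε : ℝ) : Set ℝ :=
  {v | ∃ f : Fin K → Fin Nt → ℂ, power f ≤ P ∧
        (∃ q : ℝ, 0 < q ∧ q ≤ gfun a f ∧ Cq Λ D q ≤ ε) ∧
        v = ⨅ k, SINR h σ2 f k}

/-- `S(P, ε)`: the optimal value of the max-min-SINR problem. -/
def Sval {Nt K N : ℕ} (h : Fin K → Fin Nt → ℂ) (a : Fin Nt → ℂ) (σ2 : ℝ)
    (Λ : Matrix (Fin 2) (Fin N) ℝ) (D : Matrix (Fin N) (Fin N) ℝ)
    (P ε : ℝ) : ℝ :=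
  sSup (Sfeas h a σ2 Λ D P ε)

/-- Value set of the power-minimization problem `𝒫(η, P, ε)`. -/
def Pfeas {Nt K N : ℕ} (h : Fin K → Fin Nt → ℂ) (a : Fin Nt → ℂ) (σ2 : ℝ)
    (Λ : Matrix (Fin 2) (Fin N) ℝ) (D : Matrix (Fin N) (Fin N) ℝ)
    (η P ε : ℝ) : Set ℝ :=
  {v | ∃ f : Fin K → Fin Nt → ℂ, (∀ k, SINR h σ2 f k ≥ η) ∧
        (∃ q : ℝ, 0 < q ∧ q ≤ gfun a f ∧ Cq Λ D q ≤ ε) ∧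
        v = power f / P}

/-- `𝒫(η, P, ε)`: the optimal value of the power-minimization problem. -/
def Pval {Nt K N : ℕ} (h : Fin K → Fin Nt → ℂ) (a : Fin Nt → ℂ) (σ2 : ℝ)
    (Λ : Matrix (Fin 2) (Fin N) ℝ) (D : Matrix (Fin N) (Fin N) ℝ)
    (η P ε : ℝ) : ℝ :=
  sInf (Pfeas h a σ2 Λ D η P ε)


theorem ratio_scale_lt (A B s u : ℝ) (hB : 0 ≤ B) (hs : 0 < s) (hu : 1 < u)
    (hpos : 0 < A / (B + s)) : A / (B + s) < u * A / (u * B + s) := by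
  have hBs : 0 < B + s := by linarith
  have hA : 0 < A := (div_pos_iff_of_pos_right hBs).1 hpos
  have h2 : 0 < u * B + s := by nlinarith
  rw [div_lt_div_iff₀ hBs h2]
  nlinarith [mul_pos (mul_pos hA hs) (sub_pos.2 hu)]

theorem SINR_scale_lt {Nt K : ℕ} (h : Fin K → Fin Nt → ℂ) (σ2 : ℝ) (hσ2 : 0 < σ2)
    (f : Fin K → Fin Nt → ℂ) (k : Fin K) (t : ℝ) (ht : 1 < t ^ 2)
    (hpos : 0 < SINR h σ2 f k) :
    SINR h σ2 f k < SINR h σ2 (fun j => (t : ℂ) • f j) k := by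
  unfold SINR at *
  simp only [dotProduct_smul, norm_smul, mul_pow, Complex.norm_real, Real.norm_eq_abs, sq_abs,
    ← Finset.mul_sum]
  exact ratio_scale_lt _ _ _ _ (Finset.sum_nonneg fun _ _ => sq_nonneg _) hσ2 ht hpos

theorem power_scale {Nt K : ℕ} (f : Fin K → Fin Nt → ℂ) (t : ℝ) :
    power (fun j => (t : ℂ) • f j) = t ^ 2 * power f := by
  simp [power, mul_pow, Finset.mul_sum]

theorem gfun_scale {Nt K : ℕ} (a : Fin Nt → ℂ) (f : Fin K → Fin Nt → ℂ) (t : ℝ) :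
    gfun a (fun j => (t : ℂ) • f j) = t ^ 2 * gfun a f := by
  simp [gfun, mul_pow, Finset.mul_sum]

/-- Lemma 3, second identity: `𝒫(S(P,ε), P, ε) = 1`, assuming the supremum
defining `S(P,ε)` is attained at some feasible point and `S(P,ε) > 0`. -/
theorem P_of_S_eq_one {Nt K N : ℕ} (hK : 0 < K)
    (h : Fin K → Fin Nt → ℂ) (a : Fin Nt → ℂ) (σ2 : ℝ) (hσ2 : 0 < σ2)
    (Λ : Matrix (Fin 2) (Fin N) ℝ) (D : Matrix (Fin N) (Fin N) ℝ)
    (hDdiag : D.IsDiag) (hDpd : D.PosDef) (hΛD : (Λ * D * Λᵀ).PosDef)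
    (P ε : ℝ) (hP : 0 < P) (hε : 0 < ε)
    (hattain : ∃ f : Fin K → Fin Nt → ℂ, power f ≤ P ∧
        (∃ q : ℝ, 0 < q ∧ q ≤ gfun a f ∧ Cq Λ D q ≤ ε) ∧
        (⨅ k, SINR h σ2 f k) = Sval h a σ2 Λ D P ε)
    (hSpos : 0 < Sval h a σ2 Λ D P ε) :
    Pval h a σ2 Λ D (Sval h a σ2 Λ D P ε) P ε = 1 := by
  have hne : Nonempty (Fin K) := ⟨⟨0, hK⟩⟩
  have hbdd : BddAbove (Sfeas h a σ2 Λ D P ε) := by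
    by_contra hb
    have h0 := Real.sSup_of_not_bddAbove hb
    unfold Sval at hSpos
    linarith
  have hlow : ∀ f : Fin K → Fin Nt → ℂ, (∀ k, SINR h σ2 f k ≥ Sval h a σ2 Λ D P ε) →
      (∃ q : ℝ, 0 < q ∧ q ≤ gfun a f ∧ Cq Λ D q ≤ ε) → P ≤ power f := by
    intro f hf hq
    by_contra hlt
    push Not at hlt
    have hp : 0 ≤ power f :=
      Finset.sum_nonneg fun _ _ => Finset.sum_nonneg fun _ _ => sq_nonneg _
    have hPp : 0 < P + power f := by linarith
    obtain ⟨t, ht⟩ : ∃ t : ℝ, t ^ 2 = 2 * P / (P + power f) :=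
      ⟨√(2 * P / (P + power f)), Real.sq_sqrt (by positivity)⟩
    have ht1 : 1 < t ^ 2 := by
      rw [ht, one_lt_div hPp]
      linarith
    have hpow : power (fun j => (t : ℂ) • f j) ≤ P := by
      rw [power_scale, ht, div_mul_eq_mul_div, div_le_iff₀ hPp]
      nlinarith
    obtain ⟨q, hq0, hqg, hqC⟩ := hq
    have hmem : (⨅ k, SINR h σ2 (fun j => (t : ℂ) • f j) k) ∈ Sfeas h a σ2 Λ D P ε := by
      refine ⟨_, hpow, ⟨q, hq0, ?_, hqC⟩, rfl⟩
      rw [gfun_scale]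
      nlinarith
    have hle : (⨅ k, SINR h σ2 (fun j => (t : ℂ) • f j) k) ≤ Sval h a σ2 Λ D P ε :=
      le_csSup hbdd hmem
    obtain ⟨k, hk⟩ := exists_eq_ciInf_of_finite
      (f := fun k => SINR h σ2 (fun j => (t : ℂ) • f j) k)
    have h1 := SINR_scale_lt h σ2 hσ2 f k t ht1 (lt_of_lt_of_le hSpos (hf k))
    have h2 := hf k
    linarith
  obtain ⟨f, hfP, hfq, hfS⟩ := hattain
  have hfk : ∀ k, SINR h σ2 f k ≥ Sval h a σ2 Λ D P ε := by
    intro k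
    rw [← hfS]
    exact ciInf_le (Set.finite_range _).bddBelow k
  have hfeq : power f = P := le_antisymm hfP (hlow f hfk hfq)
  have hleast : IsLeast (Pfeas h a σ2 Λ D (Sval h a σ2 Λ D P ε) P ε) 1 := by
    refine ⟨⟨f, hfk, hfq, by rw [hfeq, div_self hP.ne']⟩, ?_⟩
    rintro v ⟨f', hf', hq', rfl⟩
    rw [one_le_div hP]
    exact hlow f' hf' hq'
  exact hleast.csInf_eq

end
end

section
/- (Lemma 3, first identity: S(𝒫(η,P,ε)·P, ε) = η̂.) Fix P > 0, ε > 0, and η > 0. Assume: the infimum defining 𝒫(x, P, ε) is attained whenever its feasible set is nonempty; V := 𝒫(η, P, ε) is finite and positive; and the supremum defining S(V·P, ε) is attained with S(V·P, ε) > 0. Then S(V·P, ε) is the greatest element of the set { x ≥ 0 : 𝒫(x, P, ε) = V }; in particular S(V·P, ε) ≥ η. -/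
open Matrix Finset

noncomputable section

/-- Lemma 3, first identity: `S(𝒫(η,P,ε)·P, ε)` is the greatest element of
`{x ≥ 0 : 𝒫(x,P,ε) = 𝒫(η,P,ε)}`; in particular it is at least `η`. -/
theorem S_of_P_is_greatest {Nt K N : ℕ} (hK : 0 < K)
    (h : Fin K → Fin Nt → ℂ) (a : Fin Nt → ℂ) (σ2 : ℝ) (hσ2 : 0 < σ2)
    (Λ : Matrix (Fin 2) (Fin N) ℝ) (D : Matrix (Fin N) (Fin N) ℝ)
    (hDdiag : D.IsDiag) (hDpd : D.PosDef) (hΛD : (Λ * D * Λᵀ).PosDef)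
    (P ε η : ℝ) (hP : 0 < P) (hε : 0 < ε) (hη : 0 < η)
    -- the infimum defining 𝒫(x, P, ε) is attained whenever its feasible set is nonempty
    (hattainP : ∀ x : ℝ, (Pfeas h a σ2 Λ D x P ε).Nonempty →
        Pval h a σ2 Λ D x P ε ∈ Pfeas h a σ2 Λ D x P ε)
    -- V := 𝒫(η, P, ε) is (finite and) positive
    (hV : (Pfeas h a σ2 Λ D η P ε).Nonempty)
    (hVpos : 0 < Pval h a σ2 Λ D η P ε)
    -- the supremum defining S(V·P, ε) is attained, with positive value
    (hattainS : ∃ f : Fin K → Fin Nt → ℂ,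
        power f ≤ Pval h a σ2 Λ D η P ε * P ∧
        (∃ q : ℝ, 0 < q ∧ q ≤ gfun a f ∧ Cq Λ D q ≤ ε) ∧
        (⨅ k, SINR h σ2 f k) = Sval h a σ2 Λ D (Pval h a σ2 Λ D η P ε * P) ε)
    (hSpos : 0 < Sval h a σ2 Λ D (Pval h a σ2 Λ D η P ε * P) ε) :
    IsGreatest {x : ℝ | 0 ≤ x ∧ Pval h a σ2 Λ D x P ε = Pval h a σ2 Λ D η P ε}
        (Sval h a σ2 Λ D (Pval h a σ2 Λ D η P ε * P) ε) ∧
      η ≤ Sval h a σ2 Λ D (Pval h a σ2 Λ D η P ε * P) ε := by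
  have : Nonempty (Fin K) := ⟨⟨0, hK⟩⟩
  have hbdd : BddAbove (Sfeas h a σ2 Λ D (Pval h a σ2 Λ D η P ε * P) ε) := by
    by_contra hn
    have h0 := Real.sSup_of_not_bddAbove hn
    unfold Sval at hSpos
    rw [h0] at hSpos
    exact lt_irrefl _ hSpos
  have hbelow : ∀ x : ℝ, BddBelow (Pfeas h a σ2 Λ D x P ε) := by
    intro x
    refine ⟨0, ?_⟩
    rintro v ⟨f, -, -, rfl⟩
    unfold power
    positivity
  -- any `x` with nonempty feasible set and the same optimal power is at most the supremum
  have key : ∀ x : ℝ, (Pfeas h a σ2 Λ D x P ε).Nonempty →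
      Pval h a σ2 Λ D x P ε = Pval h a σ2 Λ D η P ε →
      x ≤ Sval h a σ2 Λ D (Pval h a σ2 Λ D η P ε * P) ε := by
    intro x hne hx
    obtain ⟨f, hf, hq, hv⟩ := hattainP x hne
    have hpow : power f = Pval h a σ2 Λ D η P ε * P := by
      rw [← hx, hv, div_mul_cancel₀ _ hP.ne']
    exact (le_ciInf hf).trans (le_csSup hbdd ⟨f, hpow.le, hq, rfl⟩)
  have hηS := key η hV rfl
  refine ⟨⟨⟨hSpos.le, ?_⟩, ?_⟩, hηS⟩
  · obtain ⟨f, hpow, hq, hS⟩ := hattainS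
    have hmem : power f / P ∈ Pfeas h a σ2 Λ D
        (Sval h a σ2 Λ D (Pval h a σ2 Λ D η P ε * P) ε) P ε := by
      refine ⟨f, fun k => ?_, hq, rfl⟩
      rw [← hS]
      exact ciInf_le (Set.finite_range _).bddBelow k
    apply le_antisymm
    · exact (csInf_le (hbelow _) hmem).trans ((div_le_iff₀ hP).2 hpow)
    · refine csInf_le_csInf (hbelow η) ⟨_, hmem⟩ ?_
      rintro v ⟨g, hg, hr, rfl⟩
      exact ⟨g, fun k => hηS.trans (hg k), hr, rfl⟩
  · rintro x ⟨-, hx⟩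
    refine key x ?_ hx
    by_contra hn
    rw [Set.not_nonempty_iff_eq_empty] at hn
    rw [← hx] at hVpos
    unfold Pval at hVpos
    rw [hn, Real.sInf_empty] at hVpos
    exact lt_irrefl _ hVpos

end
end

section
/- (Full power is used at any optimum of the max-min-SINR problem.) Fix P > 0 and ε > 0. Suppose f* ∈ (ℂ^{N_t})^K together with some q* > 0 is feasible (power(f*) ≤ P, q* ≤ g(f*), C(q*) ≤ ε) and attains S(P, ε), and suppose S(P, ε) > 0. Then power(f*) = P. -/
open Matrix Finset

noncomputable section

theorem aux_dot_smul {n : ℕ} (c : ℝ) (u v : Fin n → ℂ) :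
    ‖u ⬝ᵥ ((c : ℂ) • v)‖ ^ 2 = c ^ 2 * ‖u ⬝ᵥ v‖ ^ 2 := by
  rw [dotProduct_smul, norm_smul, mul_pow, Complex.norm_real, Real.norm_eq_abs, sq_abs]

theorem aux_sinr_lt {Nt K : ℕ} (h : Fin K → Fin Nt → ℂ) (σ2 : ℝ) (hσ2 : 0 < σ2)
    (f : Fin K → Fin Nt → ℂ) (k : Fin K) (c : ℝ) (hc : 1 < c ^ 2)
    (hpos : 0 < SINR h σ2 f k) :
    SINR h σ2 f k < SINR h σ2 (fun j => (c : ℂ) • f j) k := by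
  unfold SINR at *
  simp only [aux_dot_smul, ← Finset.mul_sum]
  have hI : 0 ≤ ∑ j ∈ Finset.univ.erase k, ‖star (h k) ⬝ᵥ f j‖ ^ 2 :=
    Finset.sum_nonneg fun _ _ => sq_nonneg _
  generalize (∑ j ∈ Finset.univ.erase k, ‖star (h k) ⬝ᵥ f j‖ ^ 2) = I at *
  have hA : 0 < ‖star (h k) ⬝ᵥ f k‖ ^ 2 := by
    rcases (sq_nonneg ‖star (h k) ⬝ᵥ f k‖).eq_or_lt with h0 | h0
    · rw [← h0] at hpos; simp at hpos
    · exact h0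
  generalize ‖star (h k) ⬝ᵥ f k‖ ^ 2 = A at *
  generalize c ^ 2 = t at *
  have ht : 0 < t := by linarith
  have h1 : 0 < t * I + σ2 := by positivity
  rw [div_lt_div_iff₀ (by positivity) h1]
  nlinarith [mul_pos (mul_pos hA hσ2) (sub_pos.2 hc)]

/-- full power is used at any optimum of the max-min-SINR problem:
if `f*` (with some `q* > 0`) is feasible and attains `S(P, ε) > 0`, then `power(f*) = P`. -/
theorem full_power_at_optimum {Nt K N : ℕ} (hK : 0 < K)
    (h : Fin K → Fin Nt → ℂ) (a : Fin Nt → ℂ) (σ2 : ℝ) (hσ2 : 0 < σ2)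
    (Λ : Matrix (Fin 2) (Fin N) ℝ) (D : Matrix (Fin N) (Fin N) ℝ)
    (hDdiag : D.IsDiag) (hDpd : D.PosDef) (hΛD : (Λ * D * Λᵀ).PosDef)
    (P ε : ℝ) (hP : 0 < P) (hε : 0 < ε)
    (fstar : Fin K → Fin Nt → ℂ) (qstar : ℝ)
    (hfeas1 : power fstar ≤ P)
    (hfeas2 : 0 < qstar) (hfeas3 : qstar ≤ gfun a fstar) (hfeas4 : Cq Λ D qstar ≤ ε)
    (hopt : (⨅ k, SINR h σ2 fstar k) = Sval h a σ2 Λ D P ε)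
    (hSpos : 0 < Sval h a σ2 Λ D P ε) :
    power fstar = P := by
  by_contra hne
  have hlt : power fstar < P := lt_of_le_of_ne hfeas1 hne
  have hp0 : 0 ≤ power fstar :=
    Finset.sum_nonneg fun _ _ => Finset.sum_nonneg fun _ _ => sq_nonneg _
  haveI : Nonempty (Fin K) := ⟨⟨0, hK⟩⟩
  have hbdd : BddAbove (Sfeas h a σ2 Λ D P ε) := by
    by_contra hb
    unfold Sval at hSpos
    rw [Real.sSup_of_not_bddAbove hb] at hSpos
    exact lt_irrefl _ hSpos
  obtain ⟨t, ht1, htP⟩ : ∃ t : ℝ, 1 < t ∧ t * power fstar ≤ P := by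
    refine ⟨2 * P / (P + power fstar), ?_, ?_⟩
    · rw [one_lt_div (by linarith)]; linarith
    · rw [div_mul_eq_mul_div, div_le_iff₀ (by linarith)]; nlinarith
  have hc : Real.sqrt t ^ 2 = t := Real.sq_sqrt (by linarith)
  set c := Real.sqrt t with hcdef
  have hpow : power (fun j => (c : ℂ) • fstar j) = t * power fstar := by
    unfold power
    simp only [Pi.smul_apply, norm_smul, mul_pow, Complex.norm_real, Real.norm_eq_abs, sq_abs, hc,
      ← Finset.mul_sum]
  have hg : gfun a (fun j => (c : ℂ) • fstar j) = t * gfun a fstar := by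
    unfold gfun
    simp only [aux_dot_smul, hc, ← Finset.mul_sum]
  have hmem : (⨅ k, SINR h σ2 (fun j => (c : ℂ) • fstar j) k) ∈ Sfeas h a σ2 Λ D P ε := by
    refine ⟨_, by rw [hpow]; exact htP, ⟨qstar, hfeas2, ?_, hfeas4⟩, rfl⟩
    rw [hg]; nlinarith
  have hle := le_csSup hbdd hmem
  change _ ≤ Sval h a σ2 Λ D P ε at hle
  obtain ⟨k, hk⟩ := exists_eq_ciInf_of_finite
    (f := fun k => SINR h σ2 (fun j => (c : ℂ) • fstar j) k)
  have h1 : Sval h a σ2 Λ D P ε ≤ SINR h σ2 fstar k := by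
    rw [← hopt]; exact ciInf_le (Set.finite_range _).bddBelow k
  have h2 := aux_sinr_lt h σ2 hσ2 fstar k c (by rw [hc]; exact ht1) (by linarith)
  rw [← hk] at hle
  linarith

end
end
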